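/- arXiv:1604.08191 — 2 statements merged into one kernel-verified Lean document; each statement's English description precedes it below -/
import Mathlib

section
/- Fix a finite candidate set C with |C| = m, an m-candidate scoring vector α, one of the four scoring-rule extensions (min, max, round down, average), an axis L on C, one of the four models (single-peaked, single-plateaued, possibly single-peaked, single-peaked with outside options), a preferred candidate p ∈ C, a weighted collection S of nonmanipulative weak-order voters, and a finite list of positive integer manipulator weights. If there exist weak-order votes for the manipulators, each satisfying the chosen model with respect to L, such that p is a winner (no candidate has strictly greater total weighted score under α with the chosen extension) of the election with voters S together with the manipulators, then there exist such manipulator votes, each satisfying the chosen model with respect to L and additionally ranking p uniquely first, such that p is a winner. -/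
open scoped Classical

section Defs

variable {C : Type*}

/-- Strict preference: `a` is strictly preferred to `b` in the vote `v`. -/
def SPref (v : C → C → Prop) (a b : C) : Prop := v a b ∧ ¬ v b a

/-- Indifference (a tie) between `a` and `b` in the vote `v`. -/
def Indiff (v : C → C → Prop) (a b : C) : Prop := v a b ∧ v b a

/-- A weak order: a complete (hence reflexive) and transitive binary relation. -/
def IsWeakOrder (v : C → C → Prop) : Prop := (∀ a b, v a b ∨ v b a) ∧ Transitive v

/-- A total (linear) order: an antisymmetric weak order. -/
def IsTotalOrderRel (v : C → C → Prop) : Prop :=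
  IsWeakOrder v ∧ ∀ a b, v a b → v b a → a = b

/-- A top order: a weak order all of whose ties are within the least-preferred
indifference class. -/
def IsTopOrder (v : C → C → Prop) : Prop :=
  IsWeakOrder v ∧ ∀ a b, a ≠ b → Indiff v a b → ∀ c, v c a

/-- `c` is among the most preferred candidates of `v`. -/
def TopCand (v : C → C → Prop) (c : C) : Prop := ∀ d, v c d

/-- `v` is single-peaked w.r.t. the axis `A`: there is a peak `p` (which is then the
unique most preferred candidate) such that `v` is strictly increasing along the part of
the axis up to `p` and strictly decreasing along the part of the axis after `p`. -/
def IsSinglePeaked (A : LinearOrder C) (v : C → C → Prop) : Prop :=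
  ∃ p : C, (∀ a b, A.lt a b → A.le b p → SPref v b a) ∧
           (∀ a b, A.le p a → A.lt a b → SPref v a b)

/-- `v` is single-plateaued w.r.t. the axis `A`: the axis splits into segments `X,Y,Z`
where the interval `Y = [y₁, y₂]` consists exactly of the most preferred candidates,
`v` is strictly increasing along `X` and strictly decreasing along `Z`. -/
def IsSinglePlateaued (A : LinearOrder C) (v : C → C → Prop) : Prop :=
  ∃ y₁ y₂ : C, A.le y₁ y₂ ∧ (∀ c, (A.le y₁ c ∧ A.le c y₂) ↔ TopCand v c) ∧
    (∀ a b, A.lt a b → A.le b y₁ → SPref v b a) ∧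
    (∀ a b, A.le y₂ a → A.lt a b → SPref v a b)

/-- `v` is possibly single-peaked w.r.t. the axis `A`: `v` is weakly increasing along
the axis up to some point `p` and weakly decreasing afterwards (so the most preferred
candidates form an interval `Y` around `p`). -/
def IsPossiblySinglePeaked (A : LinearOrder C) (v : C → C → Prop) : Prop :=
  ∃ p : C, (∀ a b, A.lt a b → A.le b p → v b a) ∧
           (∀ a b, A.le p a → A.lt a b → v a b)

/-- `v` is single-peaked with outside options w.r.t. the axis `A`: the axis splits into
segments `O₁,X,Y,Z,O₂` where the inner interval `[l,r]` (split into `X`, the peak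
`Y = {p}`, and `Z`) is single-peaked, every inner candidate is strictly preferred to
every outside candidate, and all outside candidates are mutually indifferent. -/
def IsSPOutsideOptions (A : LinearOrder C) (v : C → C → Prop) : Prop :=
  ∃ l p r : C, A.le l p ∧ A.le p r ∧
    (∀ a b, A.le l a → A.lt a b → A.le b p → SPref v b a) ∧
    (∀ a b, A.le p a → A.lt a b → A.le b r → SPref v a b) ∧
    (∀ a b, A.le l a → A.le a r → ¬ (A.le l b ∧ A.le b r) → SPref v a b) ∧
    (∀ a b, ¬ (A.le l a ∧ A.le a r) → ¬ (A.le l b ∧ A.le b r) → Indiff v a b)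

/-- The number of candidates strictly preferred to `c` (the `k_i` of `c`'s class). -/
noncomputable def aboveCount [Fintype C] (v : C → C → Prop) (c : C) : ℕ :=
  Nat.card {d : C // SPref v d c}

/-- The size of `c`'s indifference class (including `c` itself). -/
noncomputable def tiedCount [Fintype C] (v : C → C → Prop) (c : C) : ℕ :=
  Nat.card {d : C // Indiff v d c}

/-- The number of indifference classes strictly below `c`'s class. -/
noncomputable def classesBelow [Fintype C] (v : C → C → Prop) (c : C) : ℕ :=
  Set.ncard ((fun d => aboveCount v d) '' {d : C | SPref v c d})

/-- An `m`-candidate scoring vector, indexed by positions `1..m`: `α 1 ≥ α 2 ≥ ... ≥ α m`. -/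
def IsScoringVec (m : ℕ) (α : ℕ → ℕ) : Prop :=
  ∀ i j, 1 ≤ i → i ≤ j → j ≤ m → α j ≤ α i

/-- The four scoring-rule extensions: min, max, round down, and average. -/
inductive ScoreExt : Type
  | emin | emax | eroundDown | eaverage

/-- The score of candidate `c` in a weak-order vote `v` under the scoring vector `α`
(for `m` candidates) with scoring-rule extension `E`: writing the vote as indifference
classes `G₁ > ... > G_r` and `k_i = |G₁| + ... + |G_{i-1}|`, a candidate in `G_i` scores
`α (k_i + |G_i|)` under min, `α (k_i + 1)` under max, `α (m - r + i)` under round down,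
and `(α (k_i + 1) + ... + α (k_i + |G_i|)) / |G_i|` under average. -/
noncomputable def extScore [Fintype C] (m : ℕ) (α : ℕ → ℕ) (E : ScoreExt)
    (v : C → C → Prop) (c : C) : ℚ :=
  match E with
  | .emin => α (aboveCount v c + tiedCount v c)
  | .emax => α (aboveCount v c + 1)
  | .eroundDown => α (m - classesBelow v c)
  | .eaverage =>
      (∑ j ∈ Finset.Icc (aboveCount v c + 1) (aboveCount v c + tiedCount v c), (α j : ℚ))
        / (tiedCount v c : ℚ)

/-- The total weighted score of candidate `c` for a weighted profile `S`
(a list of weight/vote pairs). -/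
noncomputable def profScore [Fintype C] (m : ℕ) (α : ℕ → ℕ) (E : ScoreExt)
    (S : List (ℕ × (C → C → Prop))) (c : C) : ℚ :=
  (S.map (fun wv => (wv.1 : ℚ) * extScore m α E wv.2 c)).sum

/-- The total weight of the voters in `S` strictly preferring `a` to `b`. -/
noncomputable def prefWeight (S : List (ℕ × (C → C → Prop))) (a b : C) : ℕ :=
  (S.map (fun wv => if SPref wv.2 a b then wv.1 else 0)).sum

end Defs

/-- The four models of single-peakedness for votes with ties. -/
inductive SPModel : Type
  | sp | plat | poss | oo

/-- Whether a vote `v` satisfies the given model of single-peakedness w.r.t. axis `A`. -/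
def SPModel.Sat {C : Type*} : SPModel → LinearOrder C → (C → C → Prop) → Prop
  | .sp, A, v => IsSinglePeaked A v
  | .plat, A, v => IsSinglePlateaued A v
  | .poss, A, v => IsPossiblySinglePeaked A v
  | .oo, A, v => IsSPOutsideOptions A v

/-!
Replace each manipulator vote `v` by its promotion: the candidates that `v` ranks weakly above `p`
are ranked anew by their distance from `p` on the axis, and everyone else keeps their place.

A unimodal vote satisfies, for `b` between `p` and `a` on the axis, that `b` is either weakly above
`p` or above `a`. This is exactly what makes the promoted vote peak at `p`, so promotion preserves
all four models.

Promotion can only help `p`. A candidate ranked below `p` keeps its score while the score of `p`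
does not drop; a candidate ranked weakly above `p` scored at least as much as `p`, and afterwards
scores at most as much. Hence no candidate gains on `p`.
-/

section WeakOrder

variable {C : Type*} {v : C → C → Prop} {a b c : C}

theorem IsWeakOrder.refl (hv : IsWeakOrder v) (a : C) : v a a :=
  (hv.1 a a).elim id id

theorem IsWeakOrder.trans (hv : IsWeakOrder v) (hab : v a b) (hbc : v b c) : v a c :=
  hv.2 hab hbc

theorem IsWeakOrder.rel_of_not_rel (hv : IsWeakOrder v) (h : ¬ v b a) : v a b :=
  (hv.1 a b).resolve_right h

theorem IsWeakOrder.sPref_iff_not_rel (hv : IsWeakOrder v) : SPref v a b ↔ ¬ v b a :=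
  ⟨And.right, fun h => ⟨hv.rel_of_not_rel h, h⟩⟩

end WeakOrder

section Promote

variable {C β : Type*} [LinearOrder β]

/-- The promotion of `p` in the vote `v`: the candidates that `v` ranks weakly above `p` are
re-sorted by increasing `f`, and all other comparisons are left as they are. It ranks `p` uniquely
first as soon as `p` is the strict minimum of `f`; on an axis, `f` is the distance from `p`. -/
def promote (f : C → β) (p : C) (v : C → C → Prop) (a b : C) : Prop :=
  if v a p ∧ v b p then f a ≤ f b else v a b

variable (f : C → β) {p : C} {v : C → C → Prop} {a b : C}

theorem promote_iff_le (ha : v a p) (hb : v b p) : promote f p v a b ↔ f a ≤ f b := by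
  simp only [promote, ha, hb, and_self, if_true]

theorem promote_iff_of_not_left (ha : ¬ v a p) : promote f p v a b ↔ v a b := by
  simp only [promote, ha, false_and, if_false]

theorem promote_iff_of_not_right (hb : ¬ v b p) : promote f p v a b ↔ v a b := by
  simp only [promote, hb, and_false, if_false]

theorem isWeakOrder_promote (p : C) (hv : IsWeakOrder v) : IsWeakOrder (promote f p v) := by
  refine ⟨fun a b => ?_, fun a b c hab hbc => ?_⟩
  · by_cases h : v a p ∧ v b p
    · rw [promote_iff_le f h.1 h.2, promote_iff_le f h.2 h.1]
      exact le_total _ _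
    · rw [promote, promote, if_neg h, if_neg (h ∘ And.symm)]
      exact hv.1 a b
  · have above_of_promote {x y : C} (hxy : promote f p v x y) (hy : v y p) : v x p := by
      by_contra hx
      exact hx (hv.trans ((promote_iff_of_not_left f hx).1 hxy) hy)
    by_cases hc : v c p
    · have hb := above_of_promote hbc hc
      have ha := above_of_promote hab hb
      rw [promote_iff_le f ha hc]
      exact ((promote_iff_le f ha hb).1 hab).trans ((promote_iff_le f hb hc).1 hbc)
    · rw [promote_iff_of_not_right f hc] at hbc ⊢
      by_cases hb : v b p
      · exact hv.trans (above_of_promote hab hb) (hv.rel_of_not_rel hc)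
      · exact hv.trans ((promote_iff_of_not_right f hb).1 hab) hbc

variable {f}

theorem promote_of_le (hv : IsWeakOrder v) (hf : f a ≤ f b) (h : v a p ∨ v a b) :
    promote f p v a b := by
  unfold promote
  split_ifs with hab
  · exact hf
  · refine h.elim (fun ha => ?_) id
    exact hv.trans ha (hv.rel_of_not_rel fun hb => hab ⟨ha, hb⟩)

theorem sPref_promote_of_lt (hv : IsWeakOrder v) (hf : f a < f b) (h : v a p ∨ SPref v a b) :
    SPref (promote f p v) a b := by
  refine (isWeakOrder_promote f p hv).sPref_iff_not_rel.2 ?_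
  unfold promote
  split_ifs with hba
  · exact hf.not_ge
  · exact h.elim (fun ha hb => hba ⟨hv.trans hb ha, ha⟩) And.right

theorem sPref_promote_of_not_rel (hv : IsWeakOrder v) (hb : ¬ v b p) (h : v a p ∨ SPref v a b) :
    SPref (promote f p v) a b := by
  refine (isWeakOrder_promote f p hv).sPref_iff_not_rel.2 ?_
  rw [promote_iff_of_not_left f hb]
  exact h.elim (fun ha hba => hb (hv.trans hba ha)) And.right

theorem sPref_promote_self (hv : IsWeakOrder v) (hf : f p < f b) : SPref (promote f p v) p b :=
  sPref_promote_of_lt hv hf (.inl (hv.refl p))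

end Promote

section PeakedOn

variable {C : Type*} [A : LinearOrder C] {R : C → C → Prop} {s : Set C} {v : C → C → Prop}
  {p q : C}

/-- The relation `R` is peaked at `p` on the axis segment `s`: walking along the axis from any
`a ∈ s` towards `p`, one only meets candidates `b` with `R b a`. Taking for `R` a vote or its
strict part gives weak or strict single-peakedness. -/
def PeakedOn (R : C → C → Prop) (s : Set C) (p : C) : Prop :=
  ∀ a ∈ s, ∀ b ∈ Set.uIcc p a, b ≠ a → R b a

theorem peakedOn_iff : PeakedOn R s p ↔
    (∀ a b, a ∈ s → a < b → b ≤ p → R b a) ∧ (∀ a b, p ≤ a → a < b → b ∈ s → R a b) := by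
  constructor
  · refine fun h => ⟨fun a b ha hab hbp => ?_, fun a b hpa hab hb => ?_⟩
    · exact h a ha b (Set.mem_uIcc.2 (.inr ⟨hab.le, hbp⟩)) hab.ne'
    · exact h b hb a (Set.mem_uIcc.2 (.inl ⟨hpa, hab.le⟩)) hab.ne
  · rintro ⟨hl, hr⟩ a ha b hb hba
    rcases Set.mem_uIcc.1 hb with ⟨hpb, hle⟩ | ⟨hle, hbp⟩
    · exact hr b a hpb (hle.lt_of_ne hba) ha
    · exact hl a b ha (hle.lt_of_ne' hba) hbp

theorem PeakedOn.rel_or_rel_of_mem (hv : ∀ a, v a a) (hRv : ∀ b a, R b a → v b a)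
    (h : PeakedOn R s q) (hp : p ∈ s) : PeakedOn (fun b a => v b p ∨ R b a) s p := by
  intro a ha b hb hba
  rcases Set.uIcc_subset_uIcc_union_uIcc (b := q) hb with hpq | hqa
  · rcases eq_or_ne b p with rfl | hbp
    · exact .inl (hv b)
    · exact .inl (hRv b p (h p hp b (Set.uIcc_comm p q ▸ hpq) hbp))
  · exact .inr (h a ha b hqa hba)

theorem isSinglePeaked_iff : IsSinglePeaked A v ↔ ∃ q, PeakedOn (SPref v) Set.univ q := by
  simp only [peakedOn_iff, IsSinglePeaked, Set.mem_univ, true_imp_iff]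

theorem isPossiblySinglePeaked_iff :
    IsPossiblySinglePeaked A v ↔ ∃ q, PeakedOn v Set.univ q := by
  simp only [peakedOn_iff, IsPossiblySinglePeaked, Set.mem_univ, true_imp_iff]

theorem isSPOutsideOptions_iff : IsSPOutsideOptions A v ↔
    ∃ l r, (∃ q ∈ Set.Icc l r, PeakedOn (SPref v) (Set.Icc l r) q) ∧
      (∀ a ∈ Set.Icc l r, ∀ b ∉ Set.Icc l r, SPref v a b) ∧
      (∀ a ∉ Set.Icc l r, ∀ b ∉ Set.Icc l r, Indiff v a b) := by
  simp only [peakedOn_iff, IsSPOutsideOptions, Set.mem_Icc]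
  constructor
  · rintro ⟨l, q, r, hlq, hqr, hl, hr, hio, hoo⟩
    exact ⟨l, r, ⟨q, ⟨hlq, hqr⟩, fun a b ha => hl a b ha.1,
        fun a b hqa hab hb => hr a b hqa hab hb.2⟩,
      fun a ha b => hio a b ha.1 ha.2, fun a ha b => hoo a b ha⟩
  · rintro ⟨l, r, ⟨q, ⟨hlq, hqr⟩, hl, hr⟩, hio, hoo⟩
    refine ⟨l, q, r, hlq, hqr, fun a b ha hab hbq => ?_, fun a b hqa hab hbr => ?_,
      fun a b hla har => hio a ⟨hla, har⟩ b, fun a b ha => hoo a ha b⟩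
    · exact hl a b ⟨ha, hab.le.trans (hbq.trans hqr)⟩ hab hbq
    · exact hr a b hqa hab ⟨hlq.trans (hqa.trans hab.le), hbr⟩

theorem IsSinglePlateaued.exists_peakedOn (h : IsSinglePlateaued A v) :
    ∃ q, PeakedOn (fun b a => TopCand v b ∨ SPref v b a) Set.univ q := by
  obtain ⟨y₁, y₂, -, htop, hl, hr⟩ := h
  refine ⟨y₁, peakedOn_iff.2 ⟨fun a b _ hab hb => .inr (hl a b hab hb), fun a b ha hab _ => ?_⟩⟩
  exact (le_total a y₂).imp (fun hay => (htop a).1 ⟨ha, hay⟩) fun hya => hr a b hya hab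

theorem IsSinglePeaked.isSinglePlateaued (hv : ∀ a, v a a) (h : IsSinglePeaked A v) :
    IsSinglePlateaued A v := by
  obtain ⟨q, hq⟩ := isSinglePeaked_iff.1 h
  have sPref_of_ne {d : C} (hd : d ≠ q) : SPref v q d := hq d trivial q Set.left_mem_uIcc hd.symm
  have topCand_iff (c : C) : TopCand v c ↔ c = q := by
    refine ⟨fun hc => by_contra fun hcq => (sPref_of_ne hcq).2 (hc q), ?_⟩
    rintro rfl d
    exact (eq_or_ne d c).elim (fun hd => hd ▸ hv d) fun hd => (sPref_of_ne hd).1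
  obtain ⟨hl, hr⟩ := peakedOn_iff.1 hq
  exact ⟨q, q, le_rfl, fun c => by rw [topCand_iff, ← le_antisymm_iff, eq_comm],
    fun a b => hl a b trivial, fun a b ha hab => hr a b ha hab trivial⟩

theorem IsSinglePeaked.isSPOutsideOptions [Finite C] (h : IsSinglePeaked A v) :
    IsSPOutsideOptions A v := by
  obtain ⟨q, hq⟩ := isSinglePeaked_iff.1 h
  have : Nonempty C := ⟨q⟩
  obtain ⟨l, hl⟩ := Finite.exists_min (id : C → C)
  obtain ⟨r, hr⟩ := Finite.exists_max (id : C → C)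
  have hlr : Set.Icc l r = Set.univ := Set.eq_univ_of_forall fun c => ⟨hl c, hr c⟩
  refine isSPOutsideOptions_iff.2 ⟨l, r, ⟨q, ?_, ?_⟩, ?_, ?_⟩ <;> simp [hlr, hq]

end PeakedOn

section AxisPromotion

variable {C : Type*} [A : LinearOrder C] {s : Set C} {v : C → C → Prop} {p : C}

/-- The distance from `p` to `d` on the axis, counted as the number of candidates between them.
Both endpoints are included, so that `axisDist p p = 1`. -/
noncomputable def axisDist (p d : C) : ℕ := (Set.uIcc p d).ncard

theorem peakedOn_axisDist_lt [Finite C] (p : C) :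
    PeakedOn (fun b a => axisDist p b < axisDist p a) Set.univ p := by
  refine fun a _ b hb hba => Set.ncard_lt_ncard ?_ (Set.toFinite _)
  refine ⟨Set.uIcc_subset_uIcc_left hb, fun h => hba ?_⟩
  have ha := h Set.right_mem_uIcc
  simp only [Set.mem_uIcc] at ha hb
  grind

theorem axisDist_self_lt [Finite C] {d : C} (hd : d ≠ p) : axisDist p p < axisDist p d :=
  peakedOn_axisDist_lt p d trivial p Set.left_mem_uIcc hd.symm

theorem PeakedOn.promote_axisDist [Finite C] (hv : IsWeakOrder v)
    (h : PeakedOn (fun b a => v b p ∨ v b a) s p) :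
    PeakedOn (promote (axisDist p) p v) s p := fun a ha b hb hba =>
  promote_of_le hv (peakedOn_axisDist_lt p a trivial b hb hba).le (h a ha b hb hba)

theorem PeakedOn.sPref_promote_axisDist [Finite C] (hv : IsWeakOrder v)
    (h : PeakedOn (fun b a => v b p ∨ SPref v b a) s p) :
    PeakedOn (SPref (promote (axisDist p) p v)) s p := fun a ha b hb hba =>
  sPref_promote_of_lt hv (peakedOn_axisDist_lt p a trivial b hb hba) (h a ha b hb hba)

theorem isSinglePeaked_promote_of_peakedOn [Finite C] (hv : IsWeakOrder v)
    (h : PeakedOn (fun b a => v b p ∨ SPref v b a) Set.univ p) :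
    IsSinglePeaked A (promote (axisDist p) p v) :=
  isSinglePeaked_iff.2 ⟨p, h.sPref_promote_axisDist hv⟩

theorem IsSinglePeaked.promote_axisDist [Finite C] (p : C) (hv : IsWeakOrder v)
    (h : IsSinglePeaked A v) : IsSinglePeaked A (promote (axisDist p) p v) := by
  obtain ⟨q, hq⟩ := isSinglePeaked_iff.1 h
  exact isSinglePeaked_promote_of_peakedOn hv
    (hq.rel_or_rel_of_mem hv.refl (fun _ _ => And.left) trivial)

theorem IsSinglePlateaued.promote_axisDist [Finite C] (p : C) (hv : IsWeakOrder v)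
    (h : IsSinglePlateaued A v) : IsSinglePlateaued A (promote (axisDist p) p v) := by
  obtain ⟨q, hq⟩ := h.exists_peakedOn
  have hp := hq.rel_or_rel_of_mem hv.refl (p := p)
    (fun b a hba => hba.elim (fun hb => hb a) And.left) trivial
  refine (isSinglePeaked_promote_of_peakedOn hv fun a ha b hb hba => ?_).isSinglePlateaued
    (isWeakOrder_promote _ p hv).refl
  exact (hp a ha b hb hba).elim .inl (Or.imp_left fun hb => hb p)

theorem IsPossiblySinglePeaked.promote_axisDist [Finite C] (p : C) (hv : IsWeakOrder v)
    (h : IsPossiblySinglePeaked A v) : IsPossiblySinglePeaked A (promote (axisDist p) p v) := by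
  obtain ⟨q, hq⟩ := isPossiblySinglePeaked_iff.1 h
  have hp := hq.rel_or_rel_of_mem (p := p) hv.refl (fun _ _ => id) trivial
  exact isPossiblySinglePeaked_iff.2 ⟨p, hp.promote_axisDist hv⟩

theorem IsSPOutsideOptions.promote_axisDist [Finite C] (p : C) (hv : IsWeakOrder v)
    (h : IsSPOutsideOptions A v) : IsSPOutsideOptions A (promote (axisDist p) p v) := by
  obtain ⟨l, r, ⟨q, -, hq⟩, hio, hoo⟩ := isSPOutsideOptions_iff.1 h
  by_cases hp : p ∈ Set.Icc l r
  · have not_rel_of_notMem {b : C} (hb : b ∉ Set.Icc l r) : ¬ v b p := (hio p hp b hb).2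
    have hpeak := (hq.rel_or_rel_of_mem hv.refl (fun _ _ => And.left) hp).sPref_promote_axisDist hv
    refine isSPOutsideOptions_iff.2 ⟨l, r, ⟨p, hp, hpeak⟩, fun a ha b hb => ?_, fun a ha b hb => ?_⟩
    · exact sPref_promote_of_not_rel hv (not_rel_of_notMem hb) (.inr (hio a ha b hb))
    · rw [Indiff, promote_iff_of_not_right _ (not_rel_of_notMem hb),
        promote_iff_of_not_right _ (not_rel_of_notMem ha)]
      exact hoo a ha b hb
  · -- An outside option is ranked last, so every candidate is re-sorted.
    have rel_p (d : C) : v d p := by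
      by_cases hd : d ∈ Set.Icc l r
      · exact (hio d hd p hp).1
      · exact (hoo d hd p hp).1
    exact (isSinglePeaked_promote_of_peakedOn hv fun _ _ b _ _ => .inl (rel_p b)).isSPOutsideOptions

theorem SPModel.Sat.promote_axisDist [Finite C] {M : SPModel} (p : C) (hv : IsWeakOrder v)
    (h : M.Sat A v) : M.Sat A (promote (axisDist p) p v) := by
  cases M with
  | sp => exact IsSinglePeaked.promote_axisDist p hv h
  | plat => exact IsSinglePlateaued.promote_axisDist p hv h
  | poss => exact IsPossiblySinglePeaked.promote_axisDist p hv h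
  | oo => exact IsSPOutsideOptions.promote_axisDist p hv h

end AxisPromotion

section Score

open scoped BigOperators

variable {C : Type*} [Fintype C] {v v' : C → C → Prop} {a b c c' : C} {m : ℕ} {α : ℕ → ℕ}

theorem aboveCount_add_tiedCount (v : C → C → Prop) (c : C) :
    aboveCount v c + tiedCount v c = {d | v d c}.ncard := by
  have hdisj : Disjoint {d | SPref v d c} {d | Indiff v d c} :=
    Set.disjoint_left.2 fun d hs hi => hs.2 hi.2
  have hunion : {d | SPref v d c} ∪ {d | Indiff v d c} = {d | v d c} := by
    ext d
    simp only [Set.mem_union, Set.mem_ofPred_eq, SPref, Indiff]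
    tauto
  rw [← hunion, Set.ncard_union_eq hdisj (Set.toFinite _) (Set.toFinite _)]
  rfl

theorem aboveCount_add_tiedCount_le_card (v : C → C → Prop) (c : C) :
    aboveCount v c + tiedCount v c ≤ Fintype.card C := by
  rw [aboveCount_add_tiedCount, ← Nat.card_eq_fintype_card]
  exact Set.ncard_le_card _

theorem tiedCount_pos (hv : IsWeakOrder v) (c : C) : 0 < tiedCount v c :=
  (Set.ncard_pos (Set.toFinite _)).2 ⟨c, hv.refl c, hv.refl c⟩

theorem classesBelow_lt_card (v : C → C → Prop) (c : C) : classesBelow v c < Fintype.card C := by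
  have hc : c ∉ {d | SPref v c d} := fun h => h.2 h.1
  calc classesBelow v c ≤ {d | SPref v c d}.ncard := Set.ncard_image_le (Set.toFinite _)
    _ < Nat.card C := Set.ncard_lt_card ((Set.ne_univ_iff_exists_notMem _).2 ⟨c, hc⟩)
    _ = Fintype.card C := Nat.card_eq_fintype_card

theorem aboveCount_add_tiedCount_le_aboveCount (hv : IsWeakOrder v) (hab : SPref v a b) :
    aboveCount v a + tiedCount v a ≤ aboveCount v b := by
  rw [aboveCount_add_tiedCount]
  exact Set.ncard_le_ncard (t := {d | SPref v d b})
    (fun d hd => ⟨hv.trans hd hab.1, fun hbd => hab.2 (hv.trans hbd hd)⟩) (Set.toFinite _)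

theorem classesBelow_le_classesBelow (hv : IsWeakOrder v) (hab : v a b) :
    classesBelow v b ≤ classesBelow v a :=
  Set.ncard_le_ncard (Set.image_mono fun _ hd =>
    ⟨hv.trans hab hd.1, fun hda => hd.2 (hv.trans hda hab)⟩) (Set.toFinite _)

theorem extScore_eaverage_eq_expect (m : ℕ) (α : ℕ → ℕ) (v : C → C → Prop) (c : C) :
    extScore m α .eaverage v c =
      𝔼 j ∈ Finset.Icc (aboveCount v c + 1) (aboveCount v c + tiedCount v c), (α j : ℚ) := by
  simp [extScore, Finset.expect_eq_sum_div_card, Nat.add_right_comm _ _ 1]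

-- `hpos` says that the last position in the class of `c'` is no later than the first one in the
-- class of `c`. Round down looks at the class index instead, hence `hbelow`.
theorem extScore_le_extScore (hm : Fintype.card C ≤ m) (hα : IsScoringVec m α) (E : ScoreExt)
    (hv : IsWeakOrder v) (hv' : IsWeakOrder v')
    (hpos : aboveCount v' c' + tiedCount v' c' ≤ aboveCount v c + 1)
    (hbelow : classesBelow v c ≤ classesBelow v' c') :
    extScore m α E v c ≤ extScore m α E v' c' := by
  have ht := tiedCount_pos hv c
  have ht' := tiedCount_pos hv' c'
  have hle := aboveCount_add_tiedCount_le_card v c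
  cases E with
  | emin => exact Nat.cast_le.2 (hα _ _ (by omega) (by omega) (by omega))
  | emax => exact Nat.cast_le.2 (hα _ _ (by omega) (by omega) (by omega))
  | eroundDown =>
    have hlt := classesBelow_lt_card v' c'
    exact Nat.cast_le.2 (hα _ _ (by omega) (by omega) (by omega))
  | eaverage =>
    rw [extScore_eaverage_eq_expect, extScore_eaverage_eq_expect]
    calc _ ≤ (α (aboveCount v c + 1) : ℚ) :=
          Finset.expect_le (Finset.nonempty_Icc.2 (by omega)) fun j hj => by
            rw [Finset.mem_Icc] at hj
            exact Nat.cast_le.2 (hα _ _ (by omega) hj.1 (by omega))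
      _ ≤ _ := Finset.le_expect (Finset.nonempty_Icc.2 (by omega)) fun j hj => by
            rw [Finset.mem_Icc] at hj
            exact Nat.cast_le.2 (hα _ _ (by omega) (by omega) (by omega))

theorem extScore_eq_of_indiff (m : ℕ) (α : ℕ → ℕ) (E : ScoreExt) (hv : IsWeakOrder v)
    (hab : Indiff v a b) : extScore m α E v a = extScore m α E v b := by
  have left_iff (d : C) : v d a ↔ v d b := ⟨(hv.trans · hab.1), (hv.trans · hab.2)⟩
  have right_iff (d : C) : v a d ↔ v b d := ⟨hv.trans hab.2, hv.trans hab.1⟩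
  cases E <;> simp only [extScore, aboveCount, tiedCount, classesBelow, SPref, Indiff, left_iff,
    right_iff]

theorem extScore_le_of_rel (hm : Fintype.card C ≤ m) (hα : IsScoringVec m α) (E : ScoreExt)
    (hv : IsWeakOrder v) (hab : v a b) : extScore m α E v b ≤ extScore m α E v a := by
  by_cases hba : v b a
  · exact (extScore_eq_of_indiff m α E hv ⟨hba, hab⟩).le
  · exact extScore_le_extScore hm hα E hv hv
      ((aboveCount_add_tiedCount_le_aboveCount hv ⟨hab, hba⟩).trans (Nat.le_succ _))
      (classesBelow_le_classesBelow hv hab)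

end Score

section ScorePromote

variable {C β : Type*} [Fintype C] [LinearOrder β] {f : C → β} {v : C → C → Prop} {p d : C}
  {m : ℕ} {α : ℕ → ℕ}

theorem aboveCount_promote_of_not_rel (f : C → β) (hd : ¬ v d p) :
    aboveCount (promote f p v) d = aboveCount v d := by
  simp only [aboveCount, SPref, promote_iff_of_not_left f hd, promote_iff_of_not_right f hd]

theorem tiedCount_promote_of_not_rel (f : C → β) (hd : ¬ v d p) :
    tiedCount (promote f p v) d = tiedCount v d := by
  simp only [tiedCount, Indiff, promote_iff_of_not_left f hd, promote_iff_of_not_right f hd]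

theorem classesBelow_promote_of_not_rel (f : C → β) (hv : IsWeakOrder v) (hd : ¬ v d p) :
    classesBelow (promote f p v) d = classesBelow v d := by
  simp only [classesBelow, SPref, promote_iff_of_not_left f hd, promote_iff_of_not_right f hd]
  congr 1
  exact Set.image_congr fun x hx => aboveCount_promote_of_not_rel f fun h => hd (hv.trans hx.1 h)

theorem extScore_promote_of_not_rel (f : C → β) (m : ℕ) (α : ℕ → ℕ) (E : ScoreExt)
    (hv : IsWeakOrder v) (hd : ¬ v d p) :
    extScore m α E (promote f p v) d = extScore m α E v d := by
  cases E <;> simp only [extScore, aboveCount_promote_of_not_rel f hd,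
    tiedCount_promote_of_not_rel f hd, classesBelow_promote_of_not_rel f hv hd]

theorem classesBelow_le_classesBelow_promote_self (f : C → β) (p : C) (hv : IsWeakOrder v) :
    classesBelow v p ≤ classesBelow (promote f p v) p := by
  refine Set.ncard_le_ncard ?_ (Set.toFinite _)
  rintro _ ⟨d, hd, rfl⟩
  exact ⟨d, sPref_promote_of_not_rel hv hd.2 (.inl (hv.refl p)),
    aboveCount_promote_of_not_rel f hd.2⟩

theorem aboveCount_add_tiedCount_promote_self (hv : IsWeakOrder v) (hf : ∀ d ≠ p, f p < f d) :
    aboveCount (promote f p v) p + tiedCount (promote f p v) p = 1 := by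
  rw [aboveCount_add_tiedCount, Set.ncard_eq_one]
  refine ⟨p, Set.eq_singleton_iff_unique_mem.2 ⟨(isWeakOrder_promote f p hv).refl p, ?_⟩⟩
  exact fun d hd => by_contra fun hdp => (sPref_promote_self hv (hf d hdp)).2 hd

theorem extScore_self_le_promote (hm : Fintype.card C ≤ m) (hα : IsScoringVec m α) (E : ScoreExt)
    (hv : IsWeakOrder v) (hf : ∀ d ≠ p, f p < f d) :
    extScore m α E v p ≤ extScore m α E (promote f p v) p :=
  extScore_le_extScore hm hα E hv (isWeakOrder_promote f p hv)
    (by rw [aboveCount_add_tiedCount_promote_self hv hf]; exact Nat.le_add_left 1 _)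
    (classesBelow_le_classesBelow_promote_self f p hv)

theorem extScore_promote_sub_le (hm : Fintype.card C ≤ m) (hα : IsScoringVec m α) (E : ScoreExt)
    (hv : IsWeakOrder v) (hf : ∀ d ≠ p, f p < f d) (d : C) :
    extScore m α E (promote f p v) d - extScore m α E (promote f p v) p ≤
      extScore m α E v d - extScore m α E v p := by
  by_cases hd : v d p
  · have hpd : promote f p v p d := by
      rcases eq_or_ne d p with rfl | hdp
      · exact (isWeakOrder_promote f d hv).refl d
      · exact (sPref_promote_self hv (hf d hdp)).1
    calc _ ≤ (0 : ℚ) := sub_nonpos.2 (extScore_le_of_rel hm hα E (isWeakOrder_promote f p hv) hpd)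
      _ ≤ _ := sub_nonneg.2 (extScore_le_of_rel hm hα E hv hd)
  · rw [extScore_promote_of_not_rel f m α E hv hd]
    exact sub_le_sub_left (extScore_self_le_promote hm hα E hv hf) _

end ScorePromote

section Profile

variable {C : Type*} [Fintype C] (m : ℕ) (α : ℕ → ℕ) (E : ScoreExt)

theorem profScore_append (S T : List (ℕ × (C → C → Prop))) (c : C) :
    profScore m α E (S ++ T) c = profScore m α E S c + profScore m α E T c := by
  simp only [profScore, List.map_append, List.sum_append]

theorem profScore_sub (S : List (ℕ × (C → C → Prop))) (c d : C) :
    profScore m α E S c - profScore m α E S d =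
      (S.map fun wv => (wv.1 : ℚ) * (extScore m α E wv.2 c - extScore m α E wv.2 d)).sum := by
  simp only [profScore, mul_sub]
  exact (Multiset.sum_map_sub (m := (S : Multiset (ℕ × (C → C → Prop))))).symm

theorem profScore_map_sub_le {g : (C → C → Prop) → C → C → Prop}
    {T : List (ℕ × (C → C → Prop))} {c d : C}
    (hg : ∀ wv ∈ T, extScore m α E (g wv.2) c - extScore m α E (g wv.2) d ≤
      extScore m α E wv.2 c - extScore m α E wv.2 d) :
    profScore m α E (T.map (Prod.map id g)) c - profScore m α E (T.map (Prod.map id g)) d ≤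
      profScore m α E T c - profScore m α E T d := by
  rw [profScore_sub, profScore_sub, List.map_map]
  exact List.sum_le_sum fun wv hwv => mul_le_mul_of_nonneg_left (hg wv hwv) (Nat.cast_nonneg _)

end Profile

/-- If the preferred candidate `p` can be made a winner (under an
`m`-candidate scoring vector `α` with scoring-rule extension `E`) by weak-order
manipulator votes each satisfying the chosen single-peakedness model `M` w.r.t. the
axis `A`, then `p` can be made a winner by such manipulator votes that additionally
all rank `p` uniquely first. -/
theorem manipulators_can_rank_p_first
    {C : Type*} [Fintype C] (A : LinearOrder C) (M : SPModel)
    (m : ℕ) (hm : m = Fintype.card C) (α : ℕ → ℕ) (hα : IsScoringVec m α)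
    (E : ScoreExt) (p : C)
    (S : List (ℕ × (C → C → Prop)))
    (hS : ∀ wv ∈ S, 0 < wv.1 ∧ IsWeakOrder wv.2)
    (ws : List ℕ) (hws : ∀ w ∈ ws, 0 < w)
    (hex : ∃ tv : List (C → C → Prop), tv.length = ws.length ∧
      (∀ v ∈ tv, IsWeakOrder v ∧ SPModel.Sat M A v) ∧
      (∀ d : C, profScore m α E (S ++ ws.zip tv) d ≤ profScore m α E (S ++ ws.zip tv) p)) :
    ∃ tv : List (C → C → Prop), tv.length = ws.length ∧
      (∀ v ∈ tv, IsWeakOrder v ∧ SPModel.Sat M A v ∧ (∀ d : C, d ≠ p → SPref v p d)) ∧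
      (∀ d : C, profScore m α E (S ++ ws.zip tv) d ≤ profScore m α E (S ++ ws.zip tv) p) := by
  obtain ⟨tv, hlen, hsat, hwin⟩ := hex
  have hmin (d : C) (hd : d ≠ p) : axisDist p p < axisDist p d := axisDist_self_lt hd
  refine ⟨tv.map (promote (axisDist p) p), by rw [List.length_map, hlen], ?_, fun d => ?_⟩
  · rintro _ hpv
    obtain ⟨v, hv, rfl⟩ := List.mem_map.1 hpv
    obtain ⟨hweak, hM⟩ := hsat v hv
    exact ⟨isWeakOrder_promote _ p hweak, hM.promote_axisDist p hweak,
      fun d hd => sPref_promote_self hweak (hmin d hd)⟩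
  · have hmargin := profScore_map_sub_le m α E (T := ws.zip tv) (c := d) (d := p) fun wv hwv =>
      extScore_promote_sub_le hm.ge hα E (hsat _ (List.of_mem_zip hwv).2).1 hmin d
    have hold := hwin d
    rw [profScore_append, profScore_append] at hold ⊢
    rw [List.zip_map_right]
    linarith
end

section
/- Let C be a finite set of candidates, L an axis on C, and v a weak order on C that is single-plateaued with respect to L. Define total orders v1 and v2 by breaking every tie of v in increasing and decreasing order of L respectively: if a ~_v b and a is to the left of b on L then a >_{v1} b and b >_{v2} a, and v1, v2 agree with v on all strict preferences. Then: (1) v1 and v2 are total orders single-peaked with respect to L; and (2) for all distinct candidates a, b, the combined net margin of v1 and v2 equals twice the net margin of v, i.e., ([a >_{v1} b] + [a >_{v2} b]) − ([b >_{v1} a] + [b >_{v2} a]) = 2·([a >_v b] − [b >_v a]), where [·] is 1 if the preference holds and 0 otherwise. -/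
open scoped Classical

/- A pair tied in `v` receives from `v1` the net margin of the axis and from `v2` that of the
reversed axis; these cancel, and every other pair keeps its net margin in both votes. Breaking
ties in increasing order of the axis moves the peak to the left end of the plateau, and reversing
the axis turns this case into the other one. -/

section TieBreaking

variable {C : Type*} {A : LinearOrder C} {v r : C → C → Prop} {a b : C}

/-- The vote `v` with its ties broken by the relation `r`: breaking ties in increasing (decreasing)
order of an axis `A` is the case where `r` is `A.le` (`flip A.le`). -/
def TieBreak (v r : C → C → Prop) (a b : C) : Prop := SPref v a b ∨ (Indiff v a b ∧ r a b)

theorem tieBreak_iff : TieBreak v r a b ↔ v a b ∧ (v b a → r a b) := by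
  unfold TieBreak SPref Indiff
  tauto

theorem sPref_tieBreak_iff : SPref (TieBreak v r) a b ↔ TieBreak v (SPref r) a b := by
  rw [SPref, tieBreak_iff, tieBreak_iff, tieBreak_iff, SPref]
  tauto

theorem indiff_tieBreak_iff : Indiff (TieBreak v r) a b ↔ Indiff v a b ∧ Indiff r a b := by
  rw [Indiff, tieBreak_iff, tieBreak_iff, Indiff, Indiff]
  tauto

theorem isTotalOrderRel_le (A : LinearOrder C) : IsTotalOrderRel A.le :=
  ⟨⟨A.le_total, A.le_trans⟩, A.le_antisymm⟩

theorem IsTotalOrderRel.flip (hr : IsTotalOrderRel r) : IsTotalOrderRel (flip r) :=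
  ⟨⟨fun a b => hr.1.1 b a, fun _ _ _ hba hcb => hr.1.2 hcb hba⟩,
    fun a b hba hab => hr.2 a b hab hba⟩

theorem IsWeakOrder.tieBreak (hv : IsWeakOrder v) (hr : IsWeakOrder r) :
    IsWeakOrder (TieBreak v r) := by
  obtain ⟨v_total, v_trans⟩ := hv
  obtain ⟨r_total, r_trans⟩ := hr
  refine ⟨fun a b => ?_, fun a b c hab hbc => ?_⟩
  · have := v_total a b
    have := r_total a b
    rw [tieBreak_iff, tieBreak_iff]
    tauto
  · rw [tieBreak_iff] at hab hbc ⊢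
    exact ⟨v_trans hab.1 hbc.1, fun hca =>
      r_trans (hab.2 (v_trans hbc.1 hca)) (hbc.2 (v_trans hca hab.1))⟩

theorem IsWeakOrder.isTotalOrderRel_tieBreak (hv : IsWeakOrder v) (hr : IsTotalOrderRel r) :
    IsTotalOrderRel (TieBreak v r) :=
  ⟨hv.tieBreak hr.1, fun a b hab hba =>
    have r_tie := (indiff_tieBreak_iff.1 ⟨hab, hba⟩).2
    hr.2 a b r_tie.1 r_tie.2⟩

theorem IsSinglePlateaued.isSinglePeaked_tieBreak_le (hsp : IsSinglePlateaued A v) :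
    IsSinglePeaked A (TieBreak v A.le) := by
  obtain ⟨y₁, y₂, -, top_iff, increasing, decreasing⟩ := hsp
  refine ⟨y₁, fun a b hab hb => sPref_tieBreak_iff.2 (.inl (increasing a b hab hb)),
    fun a b ha hab => sPref_tieBreak_iff.2 ?_⟩
  rcases A.le_total y₂ a with hy₂a | hay₂
  · exact .inl (decreasing a b hy₂a hab)
  · have a_top : TopCand v a := (top_iff a).1 ⟨ha, hay₂⟩
    exact tieBreak_iff.2 ⟨a_top b, fun _ => (A.lt_iff_le_not_ge a b).1 hab⟩

/-- The axis `A` read from right to left, turning decreasing tie-breaking into increasing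
tie-breaking; its order relation is `flip A.le` by definition. -/
abbrev reverseAxis (A : LinearOrder C) : LinearOrder C := @OrderDual.instLinearOrder C A

theorem IsSinglePlateaued.reverse (hsp : IsSinglePlateaued A v) :
    IsSinglePlateaued (reverseAxis A) v := by
  obtain ⟨y₁, y₂, hle, top_iff, increasing, decreasing⟩ := hsp
  exact ⟨y₂, y₁, hle, fun c => and_comm.trans (top_iff c),
    fun a b hab hb => decreasing b a hb hab, fun a b ha hab => increasing b a hab ha⟩

theorem IsSinglePeaked.of_reverse (h : IsSinglePeaked (reverseAxis A) v) :
    IsSinglePeaked A v := by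
  obtain ⟨p, increasing, decreasing⟩ := h
  exact ⟨p, fun a b hab hb => decreasing b a hb hab, fun a b ha hab => increasing b a hab ha⟩

theorem IsSinglePlateaued.isSinglePeaked_tieBreak_flip_le (hsp : IsSinglePlateaued A v) :
    IsSinglePeaked A (TieBreak v (flip A.le)) :=
  hsp.reverse.isSinglePeaked_tieBreak_le.of_reverse

/-- The net margin of `a` over `b` in the single vote `v`, namely `1`, `0` or `-1`. -/
noncomputable def netMargin (v : C → C → Prop) (a b : C) : ℤ :=
  (if SPref v a b then 1 else 0) - (if SPref v b a then 1 else 0)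

theorem netMargin_flip : netMargin (flip r) a b = -netMargin r a b :=
  (neg_sub _ _).symm

theorem netMargin_tieBreak :
    netMargin (TieBreak v r) a b =
      netMargin v a b + if Indiff v a b then netMargin r a b else 0 := by
  have tie_comm : Indiff v b a ↔ Indiff v a b := and_comm
  simp only [netMargin, sPref_tieBreak_iff, TieBreak, tie_comm]
  by_cases tie : Indiff v a b
  · have not_ab : ¬ SPref v a b := fun h => h.2 tie.2
    have not_ba : ¬ SPref v b a := fun h => h.2 tie.1
    simp [tie, not_ab, not_ba]
  · simp [tie]

theorem netMargin_tieBreak_add_netMargin_tieBreak_flip :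
    netMargin (TieBreak v r) a b + netMargin (TieBreak v (flip r)) a b =
      2 * netMargin v a b := by
  rw [netMargin_tieBreak, netMargin_tieBreak, netMargin_flip]
  split_ifs <;> ring

end TieBreaking

theorem tie_breaking_singlePeaked_and_margins_general
    {C : Type*} (A : LinearOrder C) (v v1 v2 : C → C → Prop)
    (hv : IsWeakOrder v) (hsp : IsSinglePlateaued A v)
    (hv1 : ∀ x y, v1 x y ↔ (SPref v x y ∨ (Indiff v x y ∧ A.le x y)))
    (hv2 : ∀ x y, v2 x y ↔ (SPref v x y ∨ (Indiff v x y ∧ A.le y x))) :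
    (IsTotalOrderRel v1 ∧ IsTotalOrderRel v2 ∧
      IsSinglePeaked A v1 ∧ IsSinglePeaked A v2) ∧
    (∀ a b : C,
      ((if SPref v1 a b then (1 : ℤ) else 0) + (if SPref v2 a b then 1 else 0))
          - ((if SPref v1 b a then 1 else 0) + (if SPref v2 b a then 1 else 0))
        = 2 * ((if SPref v a b then 1 else 0) - (if SPref v b a then 1 else 0))) := by
  obtain rfl : v1 = TieBreak v A.le := funext₂ fun x y => propext (hv1 x y)
  obtain rfl : v2 = TieBreak v (flip A.le) := funext₂ fun x y => propext (hv2 x y)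
  have le_total_order := isTotalOrderRel_le A
  refine ⟨⟨hv.isTotalOrderRel_tieBreak le_total_order,
    hv.isTotalOrderRel_tieBreak le_total_order.flip,
    hsp.isSinglePeaked_tieBreak_le, hsp.isSinglePeaked_tieBreak_flip_le⟩, fun a b => ?_⟩
  rw [add_sub_add_comm]
  exact netMargin_tieBreak_add_netMargin_tieBreak_flip

/-- Let `v` be a weak order single-plateaued w.r.t. the axis `A`, and let
`v1` (resp. `v2`) be obtained from `v` by breaking every tie in increasing (resp.
decreasing) order of the axis.  Then `v1` and `v2` are total orders single-peaked
w.r.t. `A`, and for all distinct candidates `a, b` the combined net margin of `v1` and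
`v2` equals twice the net margin of `v`. -/
theorem tie_breaking_singlePeaked_and_margins
    {C : Type*} [Fintype C] (A : LinearOrder C) (v v1 v2 : C → C → Prop)
    (hv : IsWeakOrder v) (hsp : IsSinglePlateaued A v)
    (hv1 : ∀ x y, v1 x y ↔ (SPref v x y ∨ (Indiff v x y ∧ A.le x y)))
    (hv2 : ∀ x y, v2 x y ↔ (SPref v x y ∨ (Indiff v x y ∧ A.le y x))) :
    (IsTotalOrderRel v1 ∧ IsTotalOrderRel v2 ∧
      IsSinglePeaked A v1 ∧ IsSinglePeaked A v2) ∧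
    (∀ a b : C, a ≠ b →
      ((if SPref v1 a b then (1 : ℤ) else 0) + (if SPref v2 a b then 1 else 0))
          - ((if SPref v1 b a then 1 else 0) + (if SPref v2 b a then 1 else 0))
        = 2 * ((if SPref v a b then 1 else 0) - (if SPref v b a then 1 else 0))) := by
  have h := tie_breaking_singlePeaked_and_margins_general A v v1 v2 hv hsp hv1 hv2
  exact ⟨h.1, fun a b _ => h.2 a b⟩
end
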